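/- Let Ω be a measurable space, let P₀ and Q₀ be probability measures on Ω, let a, b ∈ ℝ with |a − b| ≥ γ for some γ > 0, let δ ∈ (0, 1/2], and let n ≥ 1. Write P₀^⊗n and Q₀^⊗n for the n-fold product measures on Ωⁿ. Then for every measurable estimator ψ̂ₙ : Ωⁿ → ℝ, the average risk under the two-point prior Π̃ = (1−δ)·δ_{Q₀} + δ·δ_{P₀} satisfies (1−δ) · ∫⁻ |ψ̂ₙ − b| dQ₀^⊗n + δ · ∫⁻ |ψ̂ₙ − a| dP₀^⊗n ≥ (δγ/2) · (1 − TV(P₀^⊗n, Q₀^⊗n)), with integrals in the extended nonnegative reals. -/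

import Mathlib

open MeasureTheory

/-- Total variation distance between two (finite) measures:
`TV(μ, ν) = sup over measurable sets A of |μ(A) − ν(A)|`. -/
noncomputable def tvDist {Ω : Type*} [MeasurableSpace Ω] (μ ν : Measure Ω) : ℝ :=
  ⨆ A : {s : Set Ω // MeasurableSet s}, |(μ A.1).toReal - (ν A.1).toReal|

/-! The argument goes through the common part `P ⊓ Q` of the two laws. Both risks can only decrease
when `P` and `Q` are replaced by `P ⊓ Q`, and under a single measure the triangle inequality bounds
the sum of the two losses below by the separation of the targets. The mass of `P ⊓ Q` is the infimum
of `P t + Q tᶜ` over all sets `t`, which is at least `1 - tvDist P Q`. Testing instead on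
the event that the estimator is close to one of the targets would lose a factor `2`. -/

open scoped ENNReal

section CommonPart

variable {X : Type*} [MeasurableSpace X] (μ ν : Measure X)

theorem bddAbove_range_abs_measureReal_sub [IsFiniteMeasure μ] [IsFiniteMeasure ν] :
    BddAbove (Set.range fun A : {s : Set X // MeasurableSet s} => |μ.real A.1 - ν.real A.1|) := by
  refine ⟨max (μ.real Set.univ) (ν.real Set.univ), ?_⟩
  rintro _ ⟨A, rfl⟩
  exact abs_sub_le_of_nonneg_of_le
    measureReal_nonneg (le_max_of_le_left (measureReal_mono A.1.subset_univ))
    measureReal_nonneg (le_max_of_le_right (measureReal_mono A.1.subset_univ))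

theorem abs_measureReal_sub_le_tvDist [IsFiniteMeasure μ] [IsFiniteMeasure ν] {A : Set X}
    (hA : MeasurableSet A) : |μ.real A - ν.real A| ≤ tvDist μ ν :=
  le_ciSup (bddAbove_range_abs_measureReal_sub μ ν) ⟨A, hA⟩

theorem measureReal_univ_sub_tvDist_le [IsFiniteMeasure μ] [IsFiniteMeasure ν] {A : Set X}
    (hA : MeasurableSet A) : ν.real Set.univ - tvDist μ ν ≤ μ.real A + ν.real Aᶜ := by
  have hdisc := neg_le_of_abs_le (abs_measureReal_sub_le_tvDist μ ν hA)
  rw [measureReal_compl hA]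
  linarith

theorem ofReal_measureReal_univ_sub_tvDist_le_inf_univ [IsFiniteMeasure μ] [IsFiniteMeasure ν] :
    ENNReal.ofReal (ν.real Set.univ - tvDist μ ν) ≤ (μ ⊓ ν) Set.univ := by
  rw [Measure.inf_apply MeasurableSet.univ]
  refine le_sInf ?_
  rintro _ ⟨t, rfl⟩
  rw [Set.inter_univ, Set.inter_univ]
  -- The infimum runs over arbitrary `t`; passing to a measurable hull only lowers the sum.
  let T := toMeasurable μ t
  have hT : MeasurableSet T := measurableSet_toMeasurable μ t
  calc ENNReal.ofReal (ν.real Set.univ - tvDist μ ν)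
      ≤ ENNReal.ofReal (μ.real T + ν.real Tᶜ) :=
        ENNReal.ofReal_le_ofReal (measureReal_univ_sub_tvDist_le μ ν hT)
    _ = μ T + ν Tᶜ := by
        rw [ENNReal.ofReal_add measureReal_nonneg measureReal_nonneg, ofReal_measureReal,
          ofReal_measureReal]
    _ ≤ μ t + ν tᶜ :=
        add_le_add (measure_toMeasurable t).le
          (measure_mono (Set.compl_subset_compl.2 (subset_toMeasurable μ t)))

theorem lintegral_inf_add_le {f : X → ℝ≥0∞} (hf : Measurable f) (g : X → ℝ≥0∞) :
    ∫⁻ x, f x + g x ∂(μ ⊓ ν) ≤ ∫⁻ x, f x ∂μ + ∫⁻ x, g x ∂ν := by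
  rw [lintegral_add_left hf]
  exact add_le_add (lintegral_mono' inf_le_left le_rfl) (lintegral_mono' inf_le_right le_rfl)

theorem edist_mul_inf_univ_le_lintegral_edist_add {E : Type*} [PseudoEMetricSpace E]
    [MeasurableSpace E] [OpensMeasurableSpace E] (a b : E) {f : X → E} (hf : Measurable f) :
    edist a b * (μ ⊓ ν) Set.univ ≤ ∫⁻ x, edist (f x) a ∂μ + ∫⁻ x, edist (f x) b ∂ν :=
  calc edist a b * (μ ⊓ ν) Set.univ
      = ∫⁻ _, edist a b ∂(μ ⊓ ν) := (lintegral_const _).symm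
    _ ≤ ∫⁻ x, edist (f x) a + edist (f x) b ∂(μ ⊓ ν) :=
        lintegral_mono fun x => edist_triangle_left a b (f x)
    _ ≤ ∫⁻ x, edist (f x) a ∂μ + ∫⁻ x, edist (f x) b ∂ν :=
        lintegral_inf_add_le μ ν (measurable_edist_left.comp hf) _

end CommonPart

theorem stmt2_general {X E : Type*} [MeasurableSpace X] [PseudoEMetricSpace E] [MeasurableSpace E]
    [OpensMeasurableSpace E] (P Q : Measure X) [IsProbabilityMeasure P] [IsProbabilityMeasure Q]
    (a b : E) {p q : ℝ≥0∞} (hpq : p ≤ q) {f : X → E} (hf : Measurable f) :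
    p * edist a b * ENNReal.ofReal (1 - tvDist P Q) ≤
      q * ∫⁻ x, edist (f x) b ∂Q + p * ∫⁻ x, edist (f x) a ∂P := by
  have hmass : ENNReal.ofReal (1 - tvDist P Q) ≤ (P ⊓ Q) Set.univ := by
    simpa only [probReal_univ] using ofReal_measureReal_univ_sub_tvDist_le_inf_univ P Q
  calc p * edist a b * ENNReal.ofReal (1 - tvDist P Q)
      ≤ p * (edist a b * (P ⊓ Q) Set.univ) := by rw [mul_assoc]; gcongr
    _ ≤ p * (∫⁻ x, edist (f x) a ∂P + ∫⁻ x, edist (f x) b ∂Q) := by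
        gcongr
        exact edist_mul_inf_univ_le_lintegral_edist_add P Q a b hf
    _ = p * ∫⁻ x, edist (f x) b ∂Q + p * ∫⁻ x, edist (f x) a ∂P := by rw [mul_add, add_comm]
    _ ≤ q * ∫⁻ x, edist (f x) b ∂Q + p * ∫⁻ x, edist (f x) a ∂P := by gcongr

/-- Eq. (37) in Appendix C.3: the average risk under the two-point prior
`Π̃ = (1−δ)·δ_{Q₀} + δ·δ_{P₀}` satisfies
`(1−δ)·∫⁻ |ψ̂ₙ − b| dQ₀^⊗n + δ·∫⁻ |ψ̂ₙ − a| dP₀^⊗n ≥ (δγ/2)·(1 − TV(P₀^⊗n, Q₀^⊗n))`. -/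
theorem stmt2 {Ω : Type*} [MeasurableSpace Ω]
    (P₀ Q₀ : Measure Ω) [IsProbabilityMeasure P₀] [IsProbabilityMeasure Q₀]
    (a b γ δ : ℝ) (hγ : 0 < γ) (hab : γ ≤ |a - b|)
    (hδ0 : 0 < δ) (hδ : δ ≤ 1 / 2)
    (n : ℕ) (hn : 1 ≤ n)
    (psihat : (Fin n → Ω) → ℝ) (hpsi : Measurable psihat) :
    ENNReal.ofReal (δ * γ / 2 *
        (1 - tvDist (Measure.pi fun _ : Fin n => P₀) (Measure.pi fun _ : Fin n => Q₀))) ≤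
      ENNReal.ofReal (1 - δ) *
          (∫⁻ z, ENNReal.ofReal |psihat z - b| ∂(Measure.pi fun _ : Fin n => Q₀)) +
        ENNReal.ofReal δ *
          ∫⁻ z, ENNReal.ofReal |psihat z - a| ∂(Measure.pi fun _ : Fin n => P₀) := by
  have hrisk := stmt2_general (Measure.pi fun _ : Fin n => P₀) (Measure.pi fun _ : Fin n => Q₀) a b
    (ENNReal.ofReal_le_ofReal (by linarith : δ ≤ 1 - δ)) hpsi
  simp only [edist_dist, Real.dist_eq] at hrisk
  refine le_trans ?_ hrisk
  rw [mul_div_assoc, ENNReal.ofReal_mul (by positivity), ENNReal.ofReal_mul hδ0.le]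
  gcongr
  linarith
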